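/- arXiv:1009.3108 — 2 statements merged into one kernel-verified Lean document; each statement's English description precedes it below -/
import Mathlib

section
/- Let R be a commutative ring, I an ideal of R, A a commutative R-algebra, and g : A → A an R-algebra endomorphism that reduces to the identity modulo I, i.e. g(a) − a ∈ I·A for every a ∈ A. Then for every s ≥ 1, all a_1, …, a_s ∈ A and every x ∈ A, the value at x of the s-fold iterated commutator ⁅…⁅⁅g, L_{a_s}⁆, L_{a_{s−1}}⁆, …, L_{a_1}⁆ lies in I^s·A. (Thus the reduction of g modulo I^s is a differential operator of order ≤ s − 1 in Grothendieck's sense; this is the content of Theorem 5.0.4.) -/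
/-!
Since `g` is multiplicative, the iterated commutator at `x` equals
`(g a₁ - a₁) ⋯ (g aₛ - aₛ) * g x` (`iterComm_algHom_apply`). Each of the `s` factors lies in the
extended ideal `I·A`, so the product lies in `(I·A)ˢ = Iˢ·A`.
-/

/-- Iterated commutator: `iterComm g [a₁, …, aₛ]` is the `s`-fold iterated commutator
`⁅…⁅⁅g, L_{aₛ}⁆, L_{aₛ₋₁}⁆, …, L_{a₁}⁆` in `End_R(A)`, where `L_a` is left
multiplication by `a`. -/
def iterComm {R A : Type*} [CommRing R] [CommRing A] [Algebra R A]
    (g : Module.End R A) : List A → Module.End R A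
  | [] => g
  | a :: l => ⁅iterComm g l, (LinearMap.mulLeft R a : Module.End R A)⁆

/-- For an algebra endomorphism, commuting with `L_a` amounts to multiplying by `g a - a`, since
`g (a * y) - a * g y = (g a - a) * g y`; hence the iterated commutator is a closed product. -/
theorem iterComm_algHom_apply {R A : Type*} [CommRing R] [CommRing A] [Algebra R A]
    (g : A →ₐ[R] A) (l : List A) (x : A) :
    iterComm g.toLinearMap l x = (l.map fun a => g a - a).prod * g x := by
  induction l generalizing x with
  | nil => simp [iterComm]
  | cons a l ih =>
    simp only [iterComm, Ring.lie_def, LinearMap.sub_apply, Module.End.mul_apply,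
      LinearMap.mulLeft_apply, ih, map_mul, List.map_cons, List.prod_cons]
    ring

theorem prod_map_sub_mem_map_pow {R A : Type*} [CommRing R] [CommRing A] [Algebra R A]
    (I : Ideal R) (g : A →ₐ[R] A) (hg : ∀ a : A, g a - a ∈ I.map (algebraMap R A))
    (l : List A) :
    (l.map fun a => g a - a).prod ∈ (I.map (algebraMap R A)) ^ l.length := by
  induction l with
  | nil => simp
  | cons a l ih =>
    rw [List.map_cons, List.prod_cons, List.length_cons, pow_succ']
    exact Ideal.mul_mem_mul (hg a) ih

/-- Theorem 5.0.4: if the `R`-algebra endomorphism `g` of `A` reduces to the identity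
modulo `I` (i.e. `g a - a ∈ I·A` for all `a`), then for every `s ≥ 1` the value at any
`x ∈ A` of the `s`-fold iterated commutator `⁅…⁅⁅g, L_{aₛ}⁆, …, L_{a₁}⁆` lies in `Iˢ·A`;
thus the reduction of `g` modulo `Iˢ` is a differential operator of order `≤ s - 1`. -/
theorem iterComm_algHom_mem_pow_smul
    (R A : Type*) [CommRing R] [CommRing A] [Algebra R A] (I : Ideal R)
    (g : A →ₐ[R] A) (hg : ∀ a : A, g a - a ∈ I • (⊤ : Submodule R A))
    (s : ℕ) (hs : 1 ≤ s) (a : Fin s → A) (x : A) :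
    iterComm g.toLinearMap (List.ofFn a) x ∈ (I ^ s) • (⊤ : Submodule R A) := by
  simp only [Ideal.smul_top_eq_map, Submodule.restrictScalars_mem] at hg ⊢
  rw [iterComm_algHom_apply, Ideal.map_pow]
  have h := prod_map_sub_mem_map_pow I g hg (List.ofFn a)
  rw [List.length_ofFn] at h
  exact Ideal.mul_mem_right _ _ h
end

section
/- Let R be a commutative ring, I an ideal of R, A and B commutative R-algebras, and u, v : A → B two R-algebra homomorphisms that agree modulo I, i.e. v(a) − u(a) ∈ I·B for every a ∈ A. Then for every s ≥ 1, all a_1, …, a_s ∈ A and every x ∈ A, the value at x of the s-fold iterated bracket ⁅…⁅⁅v, a_s⁆_u, a_{s−1}⁆_u, …, a_1⁆_u lies in I^s·B. (Thus, modulo I^s, v is a differential operator of order ≤ s − 1 relative to u in Grothendieck's sense; this is the content of Theorem 5.0.6.) -/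
/-- Iterated bracket relative to an algebra homomorphism `u : A → B`:
`relIterComm u D [a₁, …, aₛ]` is `⁅…⁅⁅D, aₛ⁆_u, aₛ₋₁⁆_u, …, a₁⁆_u`, where
`⁅D, a⁆_u := D ∘ L_a - L_{u a} ∘ D`. -/
def relIterComm {R A B : Type*} [CommRing R] [CommRing A] [CommRing B]
    [Algebra R A] [Algebra R B] (u : A →ₐ[R] B) (D : A →ₗ[R] B) :
    List A → (A →ₗ[R] B)
  | [] => D
  | a :: l =>
      (relIterComm u D l).comp (LinearMap.mulLeft R a)
        - (LinearMap.mulLeft R (u a)).comp (relIterComm u D l)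

/-- Since `v` is multiplicative, `⁅b · v, a⁆_u = (v a - u a) b · v` for every `b : B`; iterating,
each bracket of `v` relative to `u` contributes one factor `v a - u a`. -/
theorem relIterComm_algHom_apply {R A B : Type*} [CommRing R] [CommRing A] [CommRing B]
    [Algebra R A] [Algebra R B] (u v : A →ₐ[R] B) (l : List A) (x : A) :
    relIterComm u v.toLinearMap l x = (l.map fun a => v a - u a).prod * v x := by
  induction l generalizing x with
  | nil => simp [relIterComm]
  | cons a l ih =>
    simp only [relIterComm, LinearMap.sub_apply, LinearMap.comp_apply, LinearMap.mulLeft_apply,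
      ih, map_mul, List.map_cons, List.prod_cons]
    ring

/-- Theorem 5.0.6: if the algebra homomorphisms `u, v : A → B` agree modulo `I`
(i.e. `v a - u a ∈ I·B` for all `a`), then for every `s ≥ 1` the value at any `x ∈ A`
of the `s`-fold iterated bracket `⁅…⁅⁅v, aₛ⁆_u, …, a₁⁆_u` lies in `Iˢ·B`; thus modulo
`Iˢ`, `v` is a differential operator of order `≤ s - 1` relative to `u`. -/
theorem relIterComm_algHom_mem_pow_smul
    (R A B : Type*) [CommRing R] [CommRing A] [CommRing B]
    [Algebra R A] [Algebra R B] (I : Ideal R)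
    (u v : A →ₐ[R] B) (huv : ∀ a : A, v a - u a ∈ I • (⊤ : Submodule R B))
    (s : ℕ) (hs : 1 ≤ s) (a : Fin s → A) (x : A) :
    relIterComm u v.toLinearMap (List.ofFn a) x ∈ (I ^ s) • (⊤ : Submodule R B) := by
  -- `J • B` is the underlying submodule of the extended ideal `J B`, and `Iˢ B = (I B)ˢ`.
  simp only [Ideal.smul_top_eq_map, Submodule.restrictScalars_mem] at huv ⊢
  rw [relIterComm_algHom_apply, Ideal.map_pow, List.map_ofFn, List.prod_ofFn]
  refine Ideal.mul_mem_right _ _ ?_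
  simpa using Ideal.prod_mem_prod (s := Finset.univ)
    (I := fun _ : Fin s => I.map (algebraMap R B)) fun i _ => huv (a i)
end
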